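/- arXiv:2111.07912 — 2 statements merged into one kernel-verified Lean document; each statement's English description precedes it below -/
import Mathlib

section
/- The numerator R(q) of the q-rational [r/s]_q is the rank generating function of the lattice of lower order ideals of the fence poset F(r/s): the coefficient of q^k in R(q) equals the number of order ideals of F(r/s) of size k. -/
/-!
An order ideal is built element by element, and whether the next element may belong to it depends
only on the last membership and on the next step, up or down. Hence the ideal polynomials of a
fence satisfy a transfer recursion. Let `S` and `R` be the ideal polynomials of a fence preceded by
one further element `x₀`, counting the ideals that avoid and contain `x₀` (without the weight of
`x₀`). Prefixing an up step turns `R / S` into `1 + q (R / S)`, and prefixing a down step turns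
`S / R` into `1 + q⁻¹ (S / R)`. So a block of `a` equal steps acts exactly as one level of the
`q`-deformed continued fraction, and reversing the direction accounts for both the inversion of the
fraction and that of `q`. The same recursion shows that `R` and `S` are coprime and that `S` is
monic, so `R` is the numerator of the fraction.
-/

open scoped Classical

/-- The word of up/down steps of the fence poset `F(r/s)` for `r/s = [a₁,…,a₂ₘ]`:
`false` = up, `true` = down, with blocks `a₁-1, a₂, a₃, …, a₂ₘ₋₁, a₂ₘ-1`. -/
def fenceWord (a : List ℕ) : List Bool :=
  (List.range a.length).flatMap fun i =>
    List.replicate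
      (if i = 0 ∨ i = a.length - 1 then a.getD i 0 - 1 else a.getD i 0)
      (i % 2 == 1)

/-- `S` is a lower order ideal of the fence poset `F(r/s)` on the `N-1` elements
`x_1,…,x_{N-1}` (`N = ∑ aᵢ`, element `x_{j+1}` encoded as `j : Fin (N-1)`): it is
downward closed for each cover relation `x_{j+1} < x_{j+2}` (edge `j` up) or
`x_{j+1} > x_{j+2}` (edge `j` down). -/
def IsFenceIdeal (a : List ℕ) (S : Finset (Fin (a.sum - 1))) : Prop :=
  ∀ (j : ℕ) (h : j + 1 < a.sum - 1),
    if (fenceWord a).getD j false then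
      ((⟨j, by omega⟩ : Fin (a.sum - 1)) ∈ S → (⟨j + 1, h⟩ : Fin (a.sum - 1)) ∈ S)
    else
      ((⟨j + 1, h⟩ : Fin (a.sum - 1)) ∈ S → (⟨j, by omega⟩ : Fin (a.sum - 1)) ∈ S)

/-- The Morier-Genoud–Ovsienko q-deformed continued fraction. -/
noncomputable def qCF : RatFunc ℚ → List ℕ → RatFunc ℚ
  | _, [] => 0
  | v, [a] => ∑ i ∈ Finset.range a, v ^ i
  | v, a :: b :: l => (∑ i ∈ Finset.range a, v ^ i) + v ^ a / qCF v⁻¹ (b :: l)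

open Polynomial

section Transfer

/-- The relation between the memberships `b`, `c` of two consecutive elements in an order ideal of
a fence, when the step between them is up (`s = false`) or down (`s = true`). -/
def StepLE (s b c : Bool) : Prop :=
  if s then b ≤ c else c ≤ b

/-- The rank generating polynomial of the order ideals of a fence that is preceded by a further
element whose membership in the ideal is prescribed to be `b`. The step word `w` starts with the
step out of that element, which has weight `1`, so `w.length` elements are counted. -/
noncomputable def fencePoly (R : Type*) [Semiring R] : List Bool → Bool → R[X]
  | [], _ => 1
  | s :: w, b => ∑ c : Bool, if StepLE s b c then X ^ c.toNat * fencePoly R w c else 0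

section Semiring

variable (R : Type*) [Semiring R]

theorem fencePoly_cons_self (s : Bool) (w : List Bool) :
    fencePoly R (s :: w) s = X ^ s.toNat * fencePoly R w s := by
  cases s <;> simp [fencePoly, StepLE, Bool.le_iff_imp]

theorem fencePoly_cons_of_ne {s b : Bool} (h : b ≠ s) (w : List Bool) :
    fencePoly R (s :: w) b = fencePoly R w false + X * fencePoly R w true := by
  cases s <;> cases b <;> simp_all [fencePoly, StepLE, add_comm]

theorem coeff_zero_fencePoly_false (w : List Bool) : (fencePoly R w false).coeff 0 = 1 := by
  induction w with
  | nil => simp [fencePoly]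
  | cons s w ih =>
    cases s
    · simpa [fencePoly_cons_self] using ih
    · simpa [fencePoly_cons_of_ne] using ih

theorem natDegree_fencePoly_le (w : List Bool) (b : Bool) :
    (fencePoly R w b).natDegree ≤ w.length := by
  induction w generalizing b with
  | nil => simp [fencePoly]
  | cons s w ih =>
    refine natDegree_sum_le_of_forall_le _ _ fun c _ => ?_
    split_ifs
    · rw [List.length_cons, add_comm]
      exact natDegree_mul_le_of_le ((natDegree_X_pow_le _).trans c.toNat_le) (ih c)
    · simp

theorem coeff_succ_length_fencePoly_cons_of_ne {s b : Bool} (h : b ≠ s) (w : List Bool) :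
    (fencePoly R (s :: w) b).coeff (w.length + 1) = (fencePoly R w true).coeff w.length := by
  have hlt : (fencePoly R w false).natDegree < w.length + 1 :=
    Nat.lt_succ_of_le (natDegree_fencePoly_le R w false)
  rw [fencePoly_cons_of_ne R h, coeff_add, coeff_eq_zero_of_natDegree_lt hlt, zero_add,
    coeff_X_mul]

theorem coeff_length_fencePoly_true (w : List Bool) :
    (fencePoly R w true).coeff w.length = 1 := by
  induction w with
  | nil => simp [fencePoly]
  | cons s w ih =>
    cases s
    · simpa [coeff_succ_length_fencePoly_cons_of_ne] using ih
    · simp [fencePoly_cons_self, ih]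

theorem monic_fencePoly (w : List Bool) (b : Bool) : (fencePoly R w b).Monic := by
  cases b with
  | true =>
    exact monic_of_natDegree_le_of_coeff_eq_one _ (natDegree_fencePoly_le R w true)
      (coeff_length_fencePoly_true R w)
  | false =>
    induction w with
    | nil => simp [fencePoly]
    | cons s w ih =>
      cases s
      · simpa [fencePoly_cons_self] using ih
      · refine monic_of_natDegree_le_of_coeff_eq_one _ (natDegree_fencePoly_le R _ _) ?_
        rw [List.length_cons, coeff_succ_length_fencePoly_cons_of_ne R Bool.false_ne_true,
          coeff_length_fencePoly_true]

end Semiring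

section CommRing

variable {R : Type*} [CommRing R]

theorem isCoprime_X_of_coeff_zero_eq_one {p : R[X]} (h : p.coeff 0 = 1) : IsCoprime X p := by
  refine ⟨-p.divX, 1, ?_⟩
  have hp := X_mul_divX_add p
  rw [h, map_one] at hp
  linear_combination -hp

variable (R) in
theorem isCoprime_fencePoly (w : List Bool) :
    IsCoprime (fencePoly R w true) (fencePoly R w false) := by
  induction w with
  | nil => exact isCoprime_one_left
  | cons s w ih =>
    have hX (u : List Bool) : IsCoprime X (fencePoly R u false) :=
      isCoprime_X_of_coeff_zero_eq_one (coeff_zero_fencePoly_false R u)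
    have hXR : IsCoprime (X * fencePoly R w true) (fencePoly R w false) := (hX w).mul_left ih
    cases s with
    | false =>
      rw [fencePoly_cons_of_ne R Bool.false_ne_true.symm, fencePoly_cons_self, add_comm]
      simpa using hXR.add_mul_left_left 1
    | true =>
      rw [fencePoly_cons_of_ne R Bool.false_ne_true, fencePoly_cons_self]
      simpa using hXR.add_mul_left_right 1

end CommRing

end Transfer

section OrderIdeals

/-- `χ` is the indicator function of an order ideal of the fence on `n + 1` elements with step
word `w`. Steps missing from `w` are read as up steps, and extra steps are ignored. -/
def IsIdealIndicator (w : List Bool) {n : ℕ} (χ : Fin (n + 1) → Bool) : Prop :=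
  ∀ j : Fin n, StepLE (w.getD j false) (χ j.castSucc) (χ j.succ)

theorem isIdealIndicator_cons_cons (s : Bool) (w : List Bool) {n : ℕ} (b : Bool)
    (χ : Fin (n + 1) → Bool) :
    IsIdealIndicator (s :: w) (Fin.cons b χ : Fin (n + 2) → Bool) ↔
      StepLE s b (χ 0) ∧ IsIdealIndicator w χ := by
  simp [IsIdealIndicator, Fin.forall_fin_succ (n := n)]

theorem sum_fun_fin_succ_eq_sum_sum_cons {α M : Type*} [Fintype α] [AddCommMonoid M] {n : ℕ}
    (F : (Fin (n + 1) → α) → M) :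
    ∑ f, F f = ∑ c : α, ∑ f : Fin n → α, F (Fin.cons c f : Fin (n + 1) → α) := by
  rw [← (Fin.consEquiv fun _ : Fin (n + 1) => α).sum_comp, Fintype.sum_prod_type]
  rfl

theorem fencePoly_eq_sum (R : Type*) [Semiring R] (w : List Bool) (b : Bool) :
    fencePoly R w b = ∑ χ : Fin w.length → Bool,
      if IsIdealIndicator w (Fin.cons b χ : Fin (w.length + 1) → Bool) then
        X ^ ∑ i, (χ i).toNat else 0 := by
  induction w generalizing b with
  | nil => simp [fencePoly, IsIdealIndicator]
  | cons s w ih =>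
    rw [fencePoly, List.length_cons, sum_fun_fin_succ_eq_sum_sum_cons]
    refine Fintype.sum_congr _ _ fun c => ?_
    simp only [isIdealIndicator_cons_cons, Fin.cons_zero, Fin.sum_univ_succ, Fin.cons_succ,
      pow_add, ih, Finset.mul_sum, ite_and, mul_ite, mul_zero]
    split_ifs <;> simp

theorem coeff_fencePoly (R : Type*) [Semiring R] {w : List Bool} {n : ℕ} (hn : w.length = n)
    (b : Bool) (k : ℕ) :
    (fencePoly R w b).coeff k =
      (Finset.univ.filter fun χ : Fin n → Bool =>
        IsIdealIndicator w (Fin.cons b χ : Fin (n + 1) → Bool) ∧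
          ∑ i, (χ i).toNat = k).card := by
  subst hn
  simp only [fencePoly_eq_sum, finsetSum_coeff, Finset.card_filter, Nat.cast_sum]
  refine Fintype.sum_congr _ _ fun χ => ?_
  by_cases h : IsIdealIndicator w (Fin.cons b χ : Fin (w.length + 1) → Bool) <;>
    simp [h, coeff_X_pow, eq_comm]

theorem isFenceIdeal_iff_isIdealIndicator (a : List ℕ) (S : Finset (Fin (a.sum - 1))) :
    IsFenceIdeal a S ↔
      IsIdealIndicator (false :: fenceWord a)
        (Fin.cons true fun i => decide (i ∈ S) : Fin (a.sum - 1 + 1) → Bool) := by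
  have hstep (j : ℕ) (hj : j + 1 < a.sum - 1) :
      StepLE ((fenceWord a).getD j false) (decide (⟨j, by omega⟩ ∈ S)) (decide (⟨j + 1, hj⟩ ∈ S)) ↔
        if (fenceWord a).getD j false then
          ((⟨j, by omega⟩ : Fin (a.sum - 1)) ∈ S → (⟨j + 1, hj⟩ : Fin (a.sum - 1)) ∈ S)
        else
          ((⟨j + 1, hj⟩ : Fin (a.sum - 1)) ∈ S → (⟨j, by omega⟩ : Fin (a.sum - 1)) ∈ S) := by
    simp [StepLE, Bool.le_iff_imp]
  constructor
  · rintro h ⟨_ | j, hj⟩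
    · exact Bool.le_true _
    · exact (hstep j hj).2 (h j hj)
  · exact fun h j hj => (hstep j hj).1 (h ⟨j + 1, hj⟩)

theorem card_filter_isFenceIdeal (a : List ℕ) (k : ℕ) :
    ((Finset.univ : Finset (Finset (Fin (a.sum - 1)))).filter
        fun S => IsFenceIdeal a S ∧ S.card = k).card =
      (Finset.univ.filter fun χ : Fin (a.sum - 1) → Bool =>
        IsIdealIndicator (false :: fenceWord a) (Fin.cons true χ : Fin (a.sum - 1 + 1) → Bool) ∧
          ∑ i, (χ i).toNat = k).card := by
  have hcard (S : Finset (Fin (a.sum - 1))) : ∑ i, (decide (i ∈ S)).toNat = S.card := by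
    simp [Bool.toNat, Bool.cond_decide]
  refine Finset.card_nbij' (fun S i => decide (i ∈ S))
    (fun χ => Finset.univ.filter fun i => χ i = true) ?_ ?_
    (fun S _ => by simp) (fun χ _ => by simp)
  · intro S hS
    simpa [hcard, isFenceIdeal_iff_isIdealIndicator] using hS
  · intro χ hχ
    simpa [← hcard, isFenceIdeal_iff_isIdealIndicator] using hχ

end OrderIdeals

section StepWord

/-- The word with blocks `a₁, …, aₙ₋₁, aₙ - 1` of equal steps in alternating directions, the first
block having direction `s`. For `s = false` and at least two blocks it is `fenceWord`
preceded by an up step; for a single block `fenceWord` has one step too many, which has no effect on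
the ideals. -/
def alternatingWord : Bool → List ℕ → List Bool
  | _, [] => []
  | s, [a] => List.replicate (a - 1) s
  | s, a :: b :: l => List.replicate a s ++ alternatingWord (!s) (b :: l)

theorem length_alternatingWord (s : Bool) {l : List ℕ} (hl : l ≠ []) (hlast : l.getLast hl ≠ 0) :
    (alternatingWord s l).length = l.sum - 1 := by
  induction l generalizing s with
  | nil => contradiction
  | cons a l ih =>
    cases l with
    | nil => simp [alternatingWord]
    | cons b l =>
      have hsum : (b :: l).sum ≠ 0 := fun h =>
        hlast (List.sum_eq_zero_iff.1 h _ (List.getLast_mem (List.cons_ne_nil b l)))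
      rw [alternatingWord, List.length_append, List.length_replicate,
        ih _ (List.cons_ne_nil b l) hlast, List.sum_cons (a := a)]
      omega

theorem alternatingWord_eq_flatMap (s : Bool) (l : List ℕ) :
    alternatingWord s l = (List.range l.length).flatMap fun i =>
      List.replicate (if i = l.length - 1 then l.getD i 0 - 1 else l.getD i 0)
        (s ^^ (i % 2 == 1)) := by
  induction l generalizing s with
  | nil => simp [alternatingWord]
  | cons a l ih =>
    cases l with
    | nil => simp [alternatingWord]
    | cons b l =>
      have hparity (i : ℕ) : ((i + 1) % 2 == 1) = !(i % 2 == 1) := by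
        rcases Nat.mod_two_eq_zero_or_one i with h | h <;> simp [Nat.add_mod, h]
      rw [alternatingWord, ih, List.length_cons (a := a), List.range_succ_eq_map, List.flatMap_cons,
        List.flatMap_map]
      simp [hparity]

theorem getD_false_cons_fenceWord {a : List ℕ} (ha : a ≠ []) (hhead : a.head ha ≠ 0) (j : ℕ) :
    (false :: fenceWord a).getD j false = (alternatingWord false a).getD j false := by
  match a with
  | [n] => cases j <;> simp [fenceWord, alternatingWord]
  | n :: b :: l =>
    obtain ⟨n, rfl⟩ := Nat.exists_eq_succ_of_ne_zero hhead
    rw [alternatingWord_eq_flatMap, fenceWord, List.length_cons, List.range_succ_eq_map]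
    simp [List.flatMap_map, List.replicate_succ]

end StepWord

section ContinuedFraction

variable {K : Type*} [Field K]

theorem num_algebraMap_div_of_isCoprime_of_monic {p q : K[X]} (h : IsCoprime p q) (hq : q.Monic) :
    (algebraMap K[X] (RatFunc K) p / algebraMap K[X] (RatFunc K) q).num = p := by
  set x := algebraMap K[X] (RatFunc K) p / algebraMap K[X] (RatFunc K) q with hx
  have hcross : x.num * q = p * x.denom := (RatFunc.num_mul_eq_mul_denom_iff hq.ne_zero).2 hx
  have hdenom : x.denom = q := eq_of_monic_of_associated x.monic_denom hq <|
    associated_of_dvd_dvd (RatFunc.denom_div_dvd p q)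
      (h.symm.dvd_of_dvd_mul_left (hcross ▸ dvd_mul_left q x.num))
  exact mul_right_cancel₀ hq.ne_zero (hdenom ▸ hcross)

variable (K)

/-- The variable of the level of the continued fraction given by a block of steps of direction `s`:
`q` for up steps and `q⁻¹` for down steps. -/
noncomputable def stepVar (s : Bool) : RatFunc K :=
  bif s then RatFunc.X⁻¹ else RatFunc.X

/-- The quotient of the two ideal polynomials of a fence with prescribed first membership: `R / S`
for `s = false` and `S / R` for `s = true`, where `R` counts the ideals that contain the first
element and `S` those that avoid it. -/
noncomputable def fenceRatio (s : Bool) (w : List Bool) : RatFunc K :=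
  algebraMap K[X] (RatFunc K) (fencePoly K w (!s)) / algebraMap K[X] (RatFunc K) (fencePoly K w s)

theorem stepVar_inv (s : Bool) : (stepVar K s)⁻¹ = stepVar K (!s) := by
  cases s <;> simp [stepVar]

theorem fenceRatio_inv (s : Bool) (w : List Bool) :
    (fenceRatio K s w)⁻¹ = fenceRatio K (!s) w := by
  simp [fenceRatio]

theorem fenceRatio_cons (s : Bool) (w : List Bool) :
    fenceRatio K s (s :: w) = 1 + stepVar K s * fenceRatio K s w := by
  have hX : (RatFunc.X : RatFunc K) ≠ 0 := RatFunc.X_ne_zero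
  have hS := RatFunc.algebraMap_ne_zero (monic_fencePoly K w false).ne_zero
  have hR := RatFunc.algebraMap_ne_zero (monic_fencePoly K w true).ne_zero
  rw [fenceRatio, fenceRatio, fencePoly_cons_of_ne K (Bool.not_ne_self s), fencePoly_cons_self]
  simp only [map_add, map_mul, map_pow, RatFunc.algebraMap_X]
  cases s
  · simp only [stepVar, Bool.toNat_false, Bool.not_false, cond_false]
    field_simp
  · simp only [stepVar, Bool.toNat_true, Bool.not_true, cond_true]
    field_simp
    ring

theorem fenceRatio_replicate_append (s : Bool) (n : ℕ) (w : List Bool) :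
    fenceRatio K s (List.replicate n s ++ w) =
      ∑ i ∈ Finset.range n, stepVar K s ^ i + stepVar K s ^ n * fenceRatio K s w := by
  induction n with
  | zero => simp
  | succ n ih =>
    rw [List.replicate_succ, List.cons_append, fenceRatio_cons, ih, geom_sum_succ]
    ring

theorem qCF_stepVar_eq_fenceRatio (s : Bool) {l : List ℕ} (hl : l ≠ []) (hlast : l.getLast hl ≠ 0) :
    qCF (stepVar ℚ s) l = fenceRatio ℚ s (alternatingWord s l) := by
  induction l generalizing s with
  | nil => contradiction
  | cons a l ih =>
    cases l with
    | nil =>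
      obtain ⟨n, rfl⟩ := Nat.exists_eq_succ_of_ne_zero hlast
      have h := fenceRatio_replicate_append ℚ s n []
      simpa [qCF, alternatingWord, Finset.sum_range_succ, fenceRatio, fencePoly] using h.symm
    | cons b l =>
      rw [qCF, stepVar_inv, ih (!s) (List.cons_ne_nil b l) hlast, alternatingWord,
        fenceRatio_replicate_append, div_eq_mul_inv, fenceRatio_inv, Bool.not_not]

theorem num_fenceRatio_false (w : List Bool) :
    (fenceRatio K false w).num = fencePoly K w true :=
  num_algebraMap_div_of_isCoprime_of_monic (isCoprime_fencePoly K w) (monic_fencePoly K w false)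

end ContinuedFraction

theorem num_qRational_coeff_eq_card_fence_ideals_general {a : List ℕ} (ha : a ≠ [])
    (hhead : a.head ha ≠ 0) (hlast : a.getLast ha ≠ 0) (k : ℕ) :
    (qCF RatFunc.X a).num.coeff k =
      (((Finset.univ : Finset (Finset (Fin (a.sum - 1)))).filter
        fun S => IsFenceIdeal a S ∧ S.card = k).card : ℚ) := by
  have hword (χ : Fin (a.sum - 1 + 1) → Bool) :
      IsIdealIndicator (false :: fenceWord a) χ ↔ IsIdealIndicator (alternatingWord false a) χ := by
    simp only [IsIdealIndicator, getD_false_cons_fenceWord ha hhead]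
  rw [show RatFunc.X = stepVar ℚ false from rfl, qCF_stepVar_eq_fenceRatio false ha hlast,
    num_fenceRatio_false, coeff_fencePoly ℚ (length_alternatingWord false ha hlast),
    card_filter_isFenceIdeal]
  simp only [hword]

/-- The numerator `R(q)` of `[r/s]_q` is the rank generating function of
the lattice of lower order ideals of the fence poset `F(r/s)`: the coefficient of `q^k`
in `R(q)` is the number of order ideals of `F(r/s)` of size `k`. -/
theorem num_qRational_coeff_eq_card_fence_ideals
    (m : ℕ) (hm : 0 < m) (a : List ℕ) (hlen : a.length = 2 * m)
    (hpos : ∀ x ∈ a, 1 ≤ x) (h1 : 1 < a.getD 0 0) (k : ℕ) :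
    (qCF RatFunc.X a).num.coeff k =
      (((Finset.univ : Finset (Finset (Fin (a.sum - 1)))).filter
        fun S => IsFenceIdeal a S ∧ S.card = k).card : ℚ) := by
  have ha : a ≠ [] := by rintro rfl; simp at h1
  exact num_qRational_coeff_eq_card_fence_ideals_general ha
    (Nat.one_le_iff_ne_zero.1 (hpos _ (List.head_mem ha)))
    (Nat.one_le_iff_ne_zero.1 (hpos _ (List.getLast_mem ha))) k
end

section
/- The poset of monotone lattice paths on the snake graph G(r/s), ordered by containment of the set of tiles above the path, is isomorphic to the interval [μ, λ] in Young's lattice, where λ = λ(r/s) and μ = μ(r/s); consequently R(q) = q^{−|μ|} ∑_{μ ≤ ν ≤ λ} q^{|ν|} where R(q) is the numerator of [r/s]_q. -/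
open scoped Classical

def snakeWord (a : List ℕ) : List Bool :=
  (List.range a.length).flatMap fun i =>
    List.replicate
      (if i = 0 ∨ i = a.length - 1 then a.getD i 0 - 1 else a.getD i 0)
      (i % 2 == 1)

def tilePos (w : List Bool) (j : ℕ) : ℕ × ℕ :=
  ((w.take j).count false, (w.take j).count true)

def snakeHeight (w : List Bool) : ℕ := w.count true + 1

def rowLen (w : List Bool) (y : ℕ) : ℕ :=
  ((Finset.range (w.length + 1)).filter fun j => (tilePos w j).2 ≤ y).sup
    (fun j => (tilePos w j).1) + 1

def rowMin (w : List Bool) (y : ℕ) : ℕ :=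
  rowLen w y - ((Finset.range (w.length + 1)).filter fun j => (tilePos w j).2 = y).card

/-- The `y`-th part (0-indexed, from the largest) of the partition `λ(G)`. -/
def lamPart (w : List Bool) (y : ℕ) : ℕ :=
  if y < snakeHeight w then rowLen w (snakeHeight w - 1 - y) else 0

/-- The `y`-th part (0-indexed, from the largest) of the partition `μ(G)`. -/
def muPart (w : List Bool) (y : ℕ) : ℕ :=
  if y < snakeHeight w then rowMin w (snakeHeight w - 1 - y) else 0

def IsSnakePath (w : List Bool) (p : Fin (w.length + 3) → ℕ × ℕ) : Prop :=
  p 0 = (0, 0) ∧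
  p (Fin.last _) = ((tilePos w w.length).1 + 1, (tilePos w w.length).2 + 1) ∧
  ∀ i : Fin (w.length + 2), ∃ j ≤ w.length,
    (p i.succ = ((p i.castSucc).1 + 1, (p i.castSucc).2) ∧
      (p i.castSucc = tilePos w j ∨
       p i.castSucc = ((tilePos w j).1, (tilePos w j).2 + 1))) ∨
    (p i.succ = ((p i.castSucc).1, (p i.castSucc).2 + 1) ∧
      (p i.castSucc = tilePos w j ∨
       p i.castSucc = ((tilePos w j).1 + 1, (tilePos w j).2)))

/-- Tile `j` lies above the path `p`. -/
def TileAbove (w : List Bool) (p : Fin (w.length + 3) → ℕ × ℕ) (j : ℕ) : Prop :=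
  ∃ (i : Fin (w.length + 2)) (y : ℕ), y ≤ (tilePos w j).2 ∧
    p i.castSucc = ((tilePos w j).1, y) ∧ p i.succ = ((tilePos w j).1 + 1, y)

/-!
Tile `j` is an element of a fence poset, in which consecutive tiles are comparable and the letter
between them says which is the smaller. A monotone path is determined by the tiles above it, and
these sets are exactly the order ideals. Each row of the snake graph is an interval of consecutive
tiles, namely the cells of that row lying in `λ` but not in `μ`, and since tiles can only be
northwest of one another within a row or a column, an order ideal is the same as a diagram `ν`
between `μ` and `λ`, with `|ν| - |μ|` tiles.

Generating functions of ideals containing or avoiding the first tile change by a `2 × 2` transfer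
map when a tile is prepended. Iterated over a block of equal letters, this map attaches a partial
quotient of the `q`-deformed continued fraction, so `[r/s]_q` is the ideal generating function over
its part avoiding the first tile. That part is monic with constant term `1`, hence coprime to `q`
and, by induction along the word, to the other part. So nothing cancels, and the numerator counts
the ideals.
-/

section Rows

variable {w : List Bool} {j x y : ℕ}

theorem getElem?_eq_some_false_or_true (hj : j < w.length) :
    w[j]? = some false ∨ w[j]? = some true := by
  simp [hj]

theorem tilePos_succ_of_false (h : w[j]? = some false) :
    tilePos w (j + 1) = ((tilePos w j).1 + 1, (tilePos w j).2) := by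
  simp [tilePos, List.take_add_one, h]

theorem tilePos_succ_of_true (h : w[j]? = some true) :
    tilePos w (j + 1) = ((tilePos w j).1, (tilePos w j).2 + 1) := by
  simp [tilePos, List.take_add_one, h]

theorem tilePos_fst_add_snd (hj : j ≤ w.length) : (tilePos w j).1 + (tilePos w j).2 = j := by
  rw [tilePos, List.count_false_add_count_true, List.length_take_of_le hj]

theorem tilePos_fst_mono (w : List Bool) : Monotone fun j => (tilePos w j).1 :=
  fun _ _ hij => (List.take_sublist_take_left hij).count_le _

theorem tilePos_snd_mono (w : List Bool) : Monotone fun j => (tilePos w j).2 :=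
  fun _ _ hij => (List.take_sublist_take_left hij).count_le _

theorem tilePos_snd_lt_snakeHeight (w : List Bool) (j : ℕ) : (tilePos w j).2 < snakeHeight w :=
  Nat.lt_succ_of_le ((List.take_sublist j w).count_le _)

theorem tilePos_fst_lt_rowLen (hj : j ≤ w.length) (hy : (tilePos w j).2 ≤ y) :
    (tilePos w j).1 < rowLen w y :=
  Nat.lt_succ_of_le <| Finset.le_sup (f := fun j => (tilePos w j).1) <|
    Finset.mem_filter.2 ⟨Finset.mem_range_succ_iff.2 hj, hy⟩

theorem rowLen_mono (w : List Bool) : Monotone (rowLen w) := fun _ _ h =>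
  Nat.succ_le_succ <| Finset.sup_mono <| Finset.monotone_filter_right _ fun _ _ hj => hj.trans h

theorem rowLen_add_le (hy : y < snakeHeight w) : rowLen w y + y ≤ w.length + 1 := by
  have hsup : rowLen w y ≤ w.count false + 1 :=
    Nat.succ_le_succ <| Finset.sup_le fun j _ => (List.take_sublist j w).count_le _
  have hcount := List.count_false_add_count_true w
  rw [snakeHeight] at hy
  omega

theorem tilePos_snd_le_iff (hj : j ≤ w.length) :
    (tilePos w j).2 ≤ y ↔ j < rowLen w y + y := by
  have hadd := tilePos_fst_add_snd hj
  refine ⟨fun hy => ?_, fun hlt => ?_⟩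
  · have := tilePos_fst_lt_rowLen hj hy
    omega
  · by_contra! hy
    have hsup : rowLen w y ≤ (tilePos w j).1 + 1 := by
      refine Nat.succ_le_succ <| Finset.sup_le fun i hi => tilePos_fst_mono w ?_
      exact ((tilePos_snd_mono w).reflect_lt ((Finset.mem_filter.1 hi).2.trans_lt hy)).le
    omega

theorem rowMin_zero (w : List Bool) : rowMin w 0 = 0 := by
  have hrow : {j ∈ Finset.range (w.length + 1) | (tilePos w j).2 = 0} =
      Finset.range (rowLen w 0) := by
    ext j
    have hle : rowLen w 0 ≤ w.length + 1 := rowLen_add_le (Nat.succ_pos _)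
    have hiff := tilePos_snd_le_iff (w := w) (j := j) (y := 0)
    simp only [Finset.mem_filter, Finset.mem_range]
    omega
  rw [rowMin, hrow, Finset.card_range, Nat.sub_self]

theorem rowMin_succ_add_one (hy : y + 1 < snakeHeight w) : rowMin w (y + 1) + 1 = rowLen w y := by
  have hrow : {j ∈ Finset.range (w.length + 1) | (tilePos w j).2 = y + 1} =
      Finset.Ico (rowLen w y + y) (rowLen w (y + 1) + (y + 1)) := by
    ext j
    have hle := rowLen_add_le hy
    have hiff := tilePos_snd_le_iff (w := w) (j := j) (y := y)
    have hiff' := tilePos_snd_le_iff (w := w) (j := j) (y := y + 1)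
    simp only [Finset.mem_filter, Finset.mem_range, Finset.mem_Ico]
    omega
  have hmono := rowLen_mono w (Nat.le_add_right y 1)
  have hpos : 0 < rowLen w y := Nat.succ_pos _
  rw [rowMin, hrow, Nat.card_Ico]
  omega

theorem rowMin_lt_rowLen (hy : y < snakeHeight w) : rowMin w y < rowLen w y := by
  cases y with
  | zero => exact (rowMin_zero w).trans_lt (Nat.succ_pos _)
  | succ y => exact (rowMin_succ_add_one hy).trans_le (rowLen_mono w (Nat.le_add_right y 1))

theorem rowMin_le_rowMin_succ (hy : y + 1 < snakeHeight w) : rowMin w y ≤ rowMin w (y + 1) := by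
  have := rowMin_lt_rowLen (w := w) (y := y) (by omega)
  have := rowMin_succ_add_one hy
  omega

theorem tilePos_snd_eq_iff (hy : y < snakeHeight w) (hj : j ≤ w.length) :
    (tilePos w j).2 = y ↔ rowMin w y + y ≤ j ∧ j < rowLen w y + y := by
  cases y with
  | zero =>
    rw [rowMin_zero, ← tilePos_snd_le_iff hj]
    omega
  | succ y =>
    have hprev := tilePos_snd_le_iff hj (y := y)
    have hmin := rowMin_succ_add_one hy
    rw [← tilePos_snd_le_iff hj]
    omega

theorem rowMin_le_tilePos_fst (hj : j ≤ w.length) : rowMin w (tilePos w j).2 ≤ (tilePos w j).1 := by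
  have := (tilePos_snd_eq_iff (tilePos_snd_lt_snakeHeight w j) hj).1 rfl
  have := tilePos_fst_add_snd hj
  omega

theorem tilePos_add_of_mem_row (hy : y < snakeHeight w) (hmin : rowMin w y ≤ x)
    (hlen : x < rowLen w y) : x + y ≤ w.length ∧ tilePos w (x + y) = (x, y) := by
  have hle : x + y ≤ w.length := by
    have := rowLen_add_le hy
    omega
  have hsnd := (tilePos_snd_eq_iff hy hle).2 (by omega)
  have := tilePos_fst_add_snd hle
  exact ⟨hle, Prod.ext (by simp only; omega) hsnd⟩

end Rows

/-- `A` is an order ideal of the fence poset on the tiles of the snake graph of `w`: each letter of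
`w` joins two consecutive tiles, and `A` contains, with a tile, its neighbour to the left
(letter `false`) or above (letter `true`). -/
def IsTileIdeal (w : List Bool) (A : Finset ℕ) : Prop :=
  ∀ j, (w[j]? = some false → j + 1 ∈ A → j ∈ A) ∧ (w[j]? = some true → j ∈ A → j + 1 ∈ A)

/-- The order ideals of the fence poset of the snake graph of `w`, as sets of tile indices. -/
noncomputable def tileIdeals (w : List Bool) : Finset (Finset ℕ) :=
  {A ∈ (Finset.range (w.length + 1)).powerset | IsTileIdeal w A}

theorem mem_tileIdeals {w : List Bool} {A : Finset ℕ} :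
    A ∈ tileIdeals w ↔ (∀ j ∈ A, j ≤ w.length) ∧ IsTileIdeal w A := by
  simp [tileIdeals, Finset.subset_iff]

/-- The interval `[μ, λ]` in Young's lattice. -/
abbrev YoungInterval (w : List Bool) : Type :=
  {ν : ℕ → ℕ // Antitone ν ∧ ∀ y, muPart w y ≤ ν y ∧ ν y ≤ lamPart w y}

section YoungInterval

variable {w : List Bool} {A : Finset ℕ} {i j k x y : ℕ}

theorem IsTileIdeal.mem_of_snd_eq (hA : IsTileIdeal w A) (hji : j ≤ i) (hi : i ∈ A)
    (hlen : i ≤ w.length) (hrow : (tilePos w j).2 = (tilePos w i).2) : j ∈ A := by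
  induction hji using Nat.decreasingInduction with
  | self => exact hi
  | of_succ k hk ih =>
    have hle : (tilePos w (k + 1)).2 ≤ (tilePos w i).2 := tilePos_snd_mono w hk
    rcases getElem?_eq_some_false_or_true (hk.trans_le hlen) with hb | hb
    · exact (hA k).1 hb (ih (by rw [tilePos_succ_of_false hb, hrow]))
    · rw [tilePos_succ_of_true hb] at hle
      omega

theorem IsTileIdeal.mem_of_fst_eq (hA : IsTileIdeal w A) (hij : i ≤ j) (hi : i ∈ A)
    (hlen : j ≤ w.length) (hcol : (tilePos w j).1 = (tilePos w i).1) : j ∈ A := by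
  induction hij with
  | refl => exact hi
  | @step k hk ih =>
    have hle : (tilePos w i).1 ≤ (tilePos w k).1 := tilePos_fst_mono w hk
    rcases getElem?_eq_some_false_or_true hlen with hb | hb
    · rw [Nat.succ_eq_add_one, tilePos_succ_of_false hb] at hcol
      omega
    · rw [Nat.succ_eq_add_one, tilePos_succ_of_true hb] at hcol
      exact (hA k).2 hb (ih (by omega) hcol)

theorem IsTileIdeal.mem_of_northwest (hA : IsTileIdeal w A) (hi : i ∈ A) (hilen : i ≤ w.length)
    (hjlen : j ≤ w.length) (hfst : (tilePos w j).1 ≤ (tilePos w i).1)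
    (hsnd : (tilePos w i).2 ≤ (tilePos w j).2) : j ∈ A := by
  rcases le_total j i with hji | hij
  · exact hA.mem_of_snd_eq hji hi hilen (le_antisymm (tilePos_snd_mono w hji) hsnd)
  · exact hA.mem_of_fst_eq hij hi hjlen (le_antisymm hfst (tilePos_fst_mono w hij))

theorem muPart_reflect (hy : y < snakeHeight w) :
    muPart w (snakeHeight w - 1 - y) = rowMin w y := by
  rw [muPart, if_pos (by omega), show snakeHeight w - 1 - (snakeHeight w - 1 - y) = y by omega]

theorem lamPart_reflect (hy : y < snakeHeight w) :
    lamPart w (snakeHeight w - 1 - y) = rowLen w y := by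
  rw [lamPart, if_pos (by omega), show snakeHeight w - 1 - (snakeHeight w - 1 - y) = y by omega]

theorem YoungInterval.le_iff {ν ν' : YoungInterval w} :
    ν ≤ ν' ↔ ∀ y < snakeHeight w,
      ν.1 (snakeHeight w - 1 - y) ≤ ν'.1 (snakeHeight w - 1 - y) := by
  refine ⟨fun h y _ => h _, fun h k => ?_⟩
  rcases lt_or_ge k (snakeHeight w) with hk | hk
  · have := h (snakeHeight w - 1 - k) (by omega)
    rwa [show snakeHeight w - 1 - (snakeHeight w - 1 - k) = k by omega] at this
  · have hzero := (ν.2.2 k).2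
    rw [lamPart, if_neg hk.not_gt] at hzero
    exact hzero.trans (Nat.zero_le _)

/-- The tiles of the snake graph inside the Young diagram of `ν`. The parts of `ν` are listed from
the top row of the snake graph downwards, whence the reflection of the row index. -/
def youngIdeal (w : List Bool) (ν : ℕ → ℕ) : Finset ℕ :=
  {j ∈ Finset.range (w.length + 1) |
    (tilePos w j).1 < ν (snakeHeight w - 1 - (tilePos w j).2)}

theorem mem_youngIdeal {ν : ℕ → ℕ} :
    j ∈ youngIdeal w ν ↔
      j ≤ w.length ∧ (tilePos w j).1 < ν (snakeHeight w - 1 - (tilePos w j).2) := by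
  simp [youngIdeal]

theorem youngIdeal_mem_tileIdeals {ν : ℕ → ℕ} (hν : Antitone ν) :
    youngIdeal w ν ∈ tileIdeals w := by
  refine mem_tileIdeals.2 ⟨fun j hj => (mem_youngIdeal.1 hj).1, fun j => ⟨fun hb hj => ?_,
    fun hb hj => ?_⟩⟩
  · rw [mem_youngIdeal, tilePos_succ_of_false hb] at hj
    exact mem_youngIdeal.2 ⟨by omega, (Nat.lt_succ_self _).trans hj.2⟩
  · have hlen : j < w.length := (List.getElem?_eq_some_iff.1 hb).1
    rw [mem_youngIdeal, tilePos_succ_of_true hb]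
    exact ⟨hlen, (mem_youngIdeal.1 hj).2.trans_le (hν (by omega))⟩

theorem youngIdeal_subset_iff {ν ν' : YoungInterval w} :
    youngIdeal w ν.1 ⊆ youngIdeal w ν'.1 ↔ ν ≤ ν' := by
  refine ⟨fun h => YoungInterval.le_iff.2 fun y hy => ?_, fun h j hj => ?_⟩
  · by_contra! hlt
    have hmin := (ν'.2.2 (snakeHeight w - 1 - y)).1
    have hmax := (ν.2.2 (snakeHeight w - 1 - y)).2
    rw [muPart_reflect hy] at hmin
    rw [lamPart_reflect hy] at hmax
    obtain ⟨hlen, hpos⟩ := tilePos_add_of_mem_row hy hmin (hlt.trans_le hmax)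
    have hmem : ν'.1 (snakeHeight w - 1 - y) + y ∈ youngIdeal w ν.1 :=
      mem_youngIdeal.2 ⟨hlen, by rwa [hpos]⟩
    have hlt' := (mem_youngIdeal.1 (h hmem)).2
    rw [hpos] at hlt'
    exact hlt'.false
  · obtain ⟨hlen, hlt⟩ := mem_youngIdeal.1 hj
    exact mem_youngIdeal.2 ⟨hlen, hlt.trans_le (h _)⟩

/-- The length of row `y` of the smallest diagram that contains `μ` and the tiles of `A`. -/
def idealRow (w : List Bool) (A : Finset ℕ) (y : ℕ) : ℕ :=
  max (rowMin w y) ({j ∈ A | (tilePos w j).2 ≤ y}.sup fun j => (tilePos w j).1 + 1)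

theorem idealRow_le_idealRow_succ (hy : y + 1 < snakeHeight w) :
    idealRow w A y ≤ idealRow w A (y + 1) :=
  max_le_max (rowMin_le_rowMin_succ hy) <| Finset.sup_mono <|
    Finset.monotone_filter_right _ fun _ _ hj => Nat.le_succ_of_le hj

theorem idealRow_le_rowLen (hA : ∀ j ∈ A, j ≤ w.length) : idealRow w A y ≤ rowLen w y :=
  max_le (Nat.sub_le _ _) <| Finset.sup_le fun j hj =>
    tilePos_fst_lt_rowLen (hA j (Finset.mem_filter.1 hj).1) (Finset.mem_filter.1 hj).2

theorem tilePos_fst_lt_idealRow_iff (hA : A ∈ tileIdeals w) (hj : j ≤ w.length) :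
    (tilePos w j).1 < idealRow w A (tilePos w j).2 ↔ j ∈ A := by
  obtain ⟨hlen, hideal⟩ := mem_tileIdeals.1 hA
  rw [idealRow, lt_max_iff, or_iff_right (rowMin_le_tilePos_fst hj).not_gt, Finset.lt_sup_iff]
  constructor
  · rintro ⟨i, hi, hlt⟩
    obtain ⟨hiA, hsnd⟩ := Finset.mem_filter.1 hi
    exact hideal.mem_of_northwest hiA (hlen i hiA) hj (Nat.lt_succ_iff.1 hlt) hsnd
  · exact fun hjA => ⟨j, Finset.mem_filter.2 ⟨hjA, le_rfl⟩, Nat.lt_succ_self _⟩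

/-- The `k`-th part (0-indexed, from the largest) of the partition whose rows are `idealRow w A`. -/
def idealPart (w : List Bool) (A : Finset ℕ) (k : ℕ) : ℕ :=
  if k < snakeHeight w then idealRow w A (snakeHeight w - 1 - k) else 0

theorem idealPart_reflect (hy : y < snakeHeight w) :
    idealPart w A (snakeHeight w - 1 - y) = idealRow w A y := by
  rw [idealPart, if_pos (by omega), show snakeHeight w - 1 - (snakeHeight w - 1 - y) = y by omega]

theorem antitone_idealPart (w : List Bool) (A : Finset ℕ) : Antitone (idealPart w A) := by
  refine antitone_nat_of_succ_le fun k => ?_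
  by_cases hk : k + 1 < snakeHeight w
  · have hrow := idealRow_le_idealRow_succ (w := w) (A := A) (y := snakeHeight w - 1 - (k + 1))
      (by omega)
    rw [show snakeHeight w - 1 - (k + 1) + 1 = snakeHeight w - 1 - k by omega] at hrow
    rwa [idealPart, idealPart, if_pos hk, if_pos (by omega)]
  · rw [idealPart, if_neg hk]
    exact Nat.zero_le _

theorem muPart_le_idealPart_and_le_lamPart (hA : ∀ j ∈ A, j ≤ w.length) (k : ℕ) :
    muPart w k ≤ idealPart w A k ∧ idealPart w A k ≤ lamPart w k := by
  unfold idealPart muPart lamPart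
  split_ifs
  · exact ⟨le_max_left _ _, idealRow_le_rowLen hA⟩
  · exact ⟨le_rfl, le_rfl⟩

theorem youngIdeal_idealPart (hA : A ∈ tileIdeals w) : youngIdeal w (idealPart w A) = A := by
  have hlen := (mem_tileIdeals.1 hA).1
  ext j
  rw [mem_youngIdeal, idealPart_reflect (tilePos_snd_lt_snakeHeight w j)]
  constructor
  · exact fun h => (tilePos_fst_lt_idealRow_iff hA h.1).1 h.2
  · exact fun h => ⟨hlen j h, (tilePos_fst_lt_idealRow_iff hA (hlen j h)).2 h⟩

/-- The order isomorphism from the interval `[μ, λ]` in Young's lattice onto the order ideals of the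
fence poset, sending a diagram to the tiles it contains. -/
noncomputable def youngIntervalOrderIso (w : List Bool) : YoungInterval w ≃o tileIdeals w :=
  RelIso.ofSurjective
    (OrderEmbedding.ofMapLEIff
      (fun ν => ⟨youngIdeal w ν.1, youngIdeal_mem_tileIdeals ν.2.1⟩)
      fun _ _ => youngIdeal_subset_iff)
    fun A => ⟨⟨idealPart w A, antitone_idealPart w A,
        muPart_le_idealPart_and_le_lamPart (mem_tileIdeals.1 A.2).1⟩,
      Subtype.ext (youngIdeal_idealPart A.2)⟩

theorem coe_youngIntervalOrderIso (ν : YoungInterval w) :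
    (youngIntervalOrderIso w ν : Finset ℕ) = youngIdeal w ν.1 :=
  rfl

theorem card_youngIdeal_row (ν : YoungInterval w) (hy : y < snakeHeight w) :
    {j ∈ youngIdeal w ν.1 | (tilePos w j).2 = y}.card =
      ν.1 (snakeHeight w - 1 - y) - rowMin w y := by
  have hmax := (ν.2.2 (snakeHeight w - 1 - y)).2
  rw [lamPart_reflect hy] at hmax
  have hrow : {j ∈ youngIdeal w ν.1 | (tilePos w j).2 = y} =
      Finset.Ico (rowMin w y + y) (ν.1 (snakeHeight w - 1 - y) + y) := by
    ext j
    rw [Finset.mem_filter, mem_youngIdeal, Finset.mem_Ico]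
    constructor
    · rintro ⟨⟨hlen, hlt⟩, rfl⟩
      have := (tilePos_snd_eq_iff hy hlen).1 rfl
      have := tilePos_fst_add_snd hlen
      omega
    · rintro ⟨hmin, hlt⟩
      have hlen : j ≤ w.length := by
        have := rowLen_add_le hy
        omega
      have hsnd := (tilePos_snd_eq_iff hy hlen).2 (by omega)
      have := tilePos_fst_add_snd hlen
      exact ⟨⟨hlen, by rw [hsnd]; omega⟩, hsnd⟩
  rw [hrow, Nat.card_Ico]
  omega

theorem sum_parts_eq_add_card (ν : YoungInterval w) :
    ∑ k ∈ Finset.range (snakeHeight w), ν.1 k =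
      ∑ k ∈ Finset.range (snakeHeight w), muPart w k + (youngIdeal w ν.1).card := by
  have hcard : (youngIdeal w ν.1).card =
      ∑ y ∈ Finset.range (snakeHeight w), {j ∈ youngIdeal w ν.1 | (tilePos w j).2 = y}.card :=
    Finset.card_eq_sum_card_fiberwise fun j _ =>
      Finset.mem_coe.2 (Finset.mem_range.2 (tilePos_snd_lt_snakeHeight w j))
  rw [hcard, ← Finset.sum_range_reflect ν.1, ← Finset.sum_range_reflect (muPart w),
    ← Finset.sum_add_distrib]
  refine Finset.sum_congr rfl fun y hy => ?_
  rw [Finset.mem_range] at hy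
  have hmin := (ν.2.2 (snakeHeight w - 1 - y)).1
  rw [muPart_reflect hy] at hmin
  rw [card_youngIdeal_row ν hy, muPart_reflect hy]
  omega

theorem finsum_youngInterval_pow {R : Type*} [CommSemiring R] (q : R) (w : List Bool) :
    ∑ᶠ ν : YoungInterval w, q ^ ∑ k ∈ Finset.range (snakeHeight w), ν.1 k =
      q ^ (∑ k ∈ Finset.range (snakeHeight w), muPart w k) *
        ∑ A ∈ tileIdeals w, q ^ A.card := by
  rw [Finset.mul_sum, ← Finset.sum_coe_sort, ← finsum_eq_sum_of_fintype]
  refine finsum_eq_of_bijective _ (youngIntervalOrderIso w).bijective fun ν => ?_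
  rw [sum_parts_eq_add_card, pow_add, coe_youngIntervalOrderIso]

end YoungInterval

/-- The monotone lattice paths on the snake graph of `w`. -/
abbrev SnakePath (w : List Bool) : Type :=
  {p : Fin (w.length + 3) → ℕ × ℕ // IsSnakePath w p}

section SnakePath

variable {w : List Bool} {p : Fin (w.length + 3) → ℕ × ℕ} {A : Finset ℕ} {j x : ℕ}

theorem IsSnakePath.step (hp : IsSnakePath w p) (i : Fin (w.length + 2)) :
    p i.succ = ((p i.castSucc).1 + 1, (p i.castSucc).2) ∨
      p i.succ = ((p i.castSucc).1, (p i.castSucc).2 + 1) := by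
  obtain ⟨j, -, ⟨h, -⟩ | ⟨h, -⟩⟩ := hp.2.2 i
  · exact Or.inl h
  · exact Or.inr h

theorem IsSnakePath.fst_add_snd (hp : IsSnakePath w p) (i : Fin (w.length + 3)) :
    (p i).1 + (p i).2 = i := by
  induction i using Fin.induction with
  | zero => simp [hp.1]
  | succ i ih =>
    rw [Fin.val_castSucc] at ih
    rcases hp.step i with h | h <;>
    · rw [h, Fin.val_succ]
      omega

theorem IsSnakePath.monotone (hp : IsSnakePath w p) : Monotone p := by
  refine Fin.monotone_iff_le_succ.2 fun i => ?_
  rcases hp.step i with h | h <;> simp [h, Prod.le_def]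

theorem IsSnakePath.corner (hp : IsSnakePath w p) (hj : j ≤ w.length) :
    p ⟨j + 1, by omega⟩ = ((tilePos w j).1 + 1, (tilePos w j).2) ∨
      p ⟨j + 1, by omega⟩ = ((tilePos w j).1, (tilePos w j).2 + 1) := by
  have hsum := hp.fst_add_snd ⟨j, by omega⟩
  obtain ⟨i, hi, h⟩ := hp.2.2 ⟨j, by omega⟩
  have hadd := tilePos_fst_add_snd hi
  simp only [Fin.succ_mk, Fin.castSucc_mk] at h hsum
  have hsucc : j = i + 1 → tilePos w j = ((tilePos w i).1 + 1, (tilePos w i).2) ∨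
      tilePos w j = ((tilePos w i).1, (tilePos w i).2 + 1) := by
    rintro rfl
    exact (getElem?_eq_some_false_or_true (by omega)).imp tilePos_succ_of_false
      tilePos_succ_of_true
  rcases h with ⟨hstep, hpos | hpos⟩ | ⟨hstep, hpos | hpos⟩ <;> rw [hpos] at hstep hsum
  · obtain rfl : i = j := by omega
    exact Or.inl hstep
  · rw [hstep]
    rcases hsucc (by omega) with h | h <;> simp [h]
  · obtain rfl : i = j := by omega
    exact Or.inr hstep
  · rw [hstep]
    rcases hsucc (by omega) with h | h <;> simp [h]

theorem IsSnakePath.exists_horizontal_step (hp : IsSnakePath w p) (i : Fin (w.length + 3))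
    (hx : x < (p i).1) :
    ∃ (k : Fin (w.length + 2)) (y : ℕ), y ≤ (p i).2 ∧
      p k.castSucc = (x, y) ∧ p k.succ = (x + 1, y) := by
  induction i using Fin.induction with
  | zero => simp [hp.1] at hx
  | succ i ih =>
    have hmono : p i.castSucc ≤ p i.succ := hp.monotone (Fin.castSucc_lt_succ).le
    rcases lt_or_ge x (p i.castSucc).1 with hlt | hge
    · obtain ⟨k, y, hy, hk⟩ := ih hlt
      exact ⟨k, y, hy.trans hmono.2, hk⟩
    · rcases hp.step i with h | h <;> rw [h] at hx
      · obtain rfl : (p i.castSucc).1 = x := by omega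
        exact ⟨i, (p i.castSucc).2, hmono.2, rfl, h⟩
      · omega

theorem IsSnakePath.tileAbove_iff (hp : IsSnakePath w p) (hj : j ≤ w.length) :
    TileAbove w p j ↔ p ⟨j + 1, by omega⟩ = ((tilePos w j).1 + 1, (tilePos w j).2) := by
  constructor
  · rintro ⟨i, y, hy, hstart, hend⟩
    refine (hp.corner hj).resolve_right fun hcorner => ?_
    have hsum := hp.fst_add_snd i.castSucc
    have hadd := tilePos_fst_add_snd hj
    rw [hstart, Fin.val_castSucc] at hsum
    have hle : p i.succ ≤ p ⟨j + 1, by omega⟩ := hp.monotone (by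
      rw [Fin.le_def, Fin.val_succ]
      simp only at hsum ⊢
      omega)
    rw [hend, hcorner, Prod.le_def] at hle
    exact Nat.not_succ_le_self _ hle.1
  · intro h
    obtain ⟨i, y, hy, hstep⟩ := hp.exists_horizontal_step ⟨j + 1, by omega⟩
      (x := (tilePos w j).1) (by rw [h]; exact Nat.lt_succ_self _)
    exact ⟨i, y, by rwa [h] at hy, hstep⟩

/-- The set of tiles above the path `p`. -/
noncomputable def tilesAbove (w : List Bool) (p : Fin (w.length + 3) → ℕ × ℕ) : Finset ℕ :=
  {j ∈ Finset.range (w.length + 1) | TileAbove w p j}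

theorem mem_tilesAbove : j ∈ tilesAbove w p ↔ j ≤ w.length ∧ TileAbove w p j := by
  simp [tilesAbove]

theorem tilesAbove_subset_iff {p' : Fin (w.length + 3) → ℕ × ℕ} :
    tilesAbove w p ⊆ tilesAbove w p' ↔ ∀ j ≤ w.length, TileAbove w p j → TileAbove w p' j := by
  simp +contextual [Finset.subset_iff, mem_tilesAbove]

theorem IsSnakePath.tilesAbove_mem_tileIdeals (hp : IsSnakePath w p) :
    tilesAbove w p ∈ tileIdeals w := by
  refine mem_tileIdeals.2 ⟨fun j hj => (mem_tilesAbove.1 hj).1, fun j => ?_⟩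
  rcases lt_or_ge j w.length with hj | hj
  · have hstep := hp.step ⟨j + 1, by omega⟩
    have hcorner := hp.corner hj.le
    have hcorner' := hp.corner (j := j + 1) hj
    simp only [Fin.succ_mk, Fin.castSucc_mk] at hstep
    rw [mem_tilesAbove, mem_tilesAbove, and_iff_right hj.le, and_iff_right (Nat.succ_le_of_lt hj),
      hp.tileAbove_iff hj.le, hp.tileAbove_iff (j := j + 1) hj]
    refine ⟨fun hb => ?_, fun hb => ?_⟩
    · rw [tilePos_succ_of_false hb] at hcorner' ⊢
      simp only [Prod.ext_iff] at hstep hcorner hcorner' ⊢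
      omega
    · rw [tilePos_succ_of_true hb] at hcorner' ⊢
      simp only [Prod.ext_iff] at hstep hcorner hcorner' ⊢
      omega
  · simp [List.getElem?_eq_none hj]

theorem IsSnakePath.eq_of_tilesAbove_eq {p' : Fin (w.length + 3) → ℕ × ℕ} (hp : IsSnakePath w p)
    (hp' : IsSnakePath w p') (h : tilesAbove w p = tilesAbove w p') : p = p' := by
  funext ⟨i, hi⟩
  rcases i with _ | j
  · exact hp.1.trans hp'.1.symm
  · rcases lt_or_ge w.length j with hlt | hj
    · obtain rfl : j = w.length + 1 := by omega
      exact hp.2.1.trans hp'.2.1.symm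
    · have hiff : j ∈ tilesAbove w p ↔ j ∈ tilesAbove w p' := by rw [h]
      rw [mem_tilesAbove, mem_tilesAbove, and_iff_right hj, and_iff_right hj, hp.tileAbove_iff hj,
        hp'.tileAbove_iff hj] at hiff
      rcases hp.corner hj with hc | hc
      · rw [hc, hiff.1 hc]
      · rw [hc, (hp'.corner hj).resolve_left fun hc' => by simpa [hc] using hiff.2 hc']

/-- The vertices of the lattice path with exactly the tiles of `A` above it. -/
noncomputable def idealPath (w : List Bool) (A : Finset ℕ) : ℕ → ℕ × ℕ
  | 0 => (0, 0)
  | j + 1 =>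
    if w.length < j then ((tilePos w w.length).1 + 1, (tilePos w w.length).2 + 1)
    else if j ∈ A then ((tilePos w j).1 + 1, (tilePos w j).2)
    else ((tilePos w j).1, (tilePos w j).2 + 1)

theorem idealPath_succ_of_mem (hj : j ≤ w.length) (hA : j ∈ A) :
    idealPath w A (j + 1) = ((tilePos w j).1 + 1, (tilePos w j).2) := by
  rw [idealPath, if_neg hj.not_gt, if_pos hA]

theorem idealPath_succ_of_notMem (hj : j ≤ w.length) (hA : j ∉ A) :
    idealPath w A (j + 1) = ((tilePos w j).1, (tilePos w j).2 + 1) := by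
  rw [idealPath, if_neg hj.not_gt, if_neg hA]

/-- The step from `u` to `v` goes rightwards or upwards along a side of a tile, as in
`IsSnakePath`. -/
def IsSnakeStep (w : List Bool) (u v : ℕ × ℕ) : Prop :=
  ∃ j ≤ w.length,
    (v = (u.1 + 1, u.2) ∧ (u = tilePos w j ∨ u = ((tilePos w j).1, (tilePos w j).2 + 1))) ∨
      (v = (u.1, u.2 + 1) ∧ (u = tilePos w j ∨ u = ((tilePos w j).1 + 1, (tilePos w j).2)))

theorem isSnakeStep_top (hj : j ≤ w.length) :
    IsSnakeStep w ((tilePos w j).1, (tilePos w j).2 + 1)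
      ((tilePos w j).1 + 1, (tilePos w j).2 + 1) :=
  ⟨j, hj, Or.inl ⟨rfl, Or.inr rfl⟩⟩

theorem isSnakeStep_right (hj : j ≤ w.length) :
    IsSnakeStep w ((tilePos w j).1 + 1, (tilePos w j).2)
      ((tilePos w j).1 + 1, (tilePos w j).2 + 1) :=
  ⟨j, hj, Or.inr ⟨rfl, Or.inr rfl⟩⟩

theorem isSnakeStep_tilePos_idealPath (A : Finset ℕ) (hj : j ≤ w.length) :
    IsSnakeStep w (tilePos w j) (idealPath w A (j + 1)) := by
  by_cases hA : j ∈ A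
  · exact ⟨j, hj, Or.inl ⟨idealPath_succ_of_mem hj hA, Or.inl rfl⟩⟩
  · exact ⟨j, hj, Or.inr ⟨idealPath_succ_of_notMem hj hA, Or.inl rfl⟩⟩

theorem IsTileIdeal.isSnakeStep_idealPath (hA : IsTileIdeal w A) (hj : j < w.length) :
    IsSnakeStep w (idealPath w A (j + 1)) (idealPath w A (j + 2)) := by
  have hnext := isSnakeStep_tilePos_idealPath A (Nat.succ_le_of_lt hj)
  rcases getElem?_eq_some_false_or_true hj with hb | hb <;> by_cases hjA : j ∈ A
  · rwa [Nat.succ_eq_add_one, tilePos_succ_of_false hb, ← idealPath_succ_of_mem hj.le hjA] at hnext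
  · rw [idealPath_succ_of_notMem hj.le hjA, idealPath_succ_of_notMem hj (mt ((hA j).1 hb) hjA),
      tilePos_succ_of_false hb]
    exact isSnakeStep_top hj.le
  · rw [idealPath_succ_of_mem hj.le hjA, idealPath_succ_of_mem hj ((hA j).2 hb hjA),
      tilePos_succ_of_true hb]
    exact isSnakeStep_right hj.le
  · rwa [Nat.succ_eq_add_one, tilePos_succ_of_true hb, ← idealPath_succ_of_notMem hj.le hjA]
      at hnext

theorem isSnakeStep_idealPath_last (w : List Bool) (A : Finset ℕ) :
    IsSnakeStep w (idealPath w A (w.length + 1)) (idealPath w A (w.length + 2)) := by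
  have hlast : idealPath w A (w.length + 2) =
      ((tilePos w w.length).1 + 1, (tilePos w w.length).2 + 1) := by
    rw [idealPath, if_pos (Nat.lt_succ_self _)]
  rw [hlast]
  by_cases hA : w.length ∈ A
  · rw [idealPath_succ_of_mem le_rfl hA]
    exact isSnakeStep_right le_rfl
  · rw [idealPath_succ_of_notMem le_rfl hA]
    exact isSnakeStep_top le_rfl

theorem IsTileIdeal.isSnakePath_idealPath (hA : IsTileIdeal w A) :
    IsSnakePath w fun i => idealPath w A i := by
  refine ⟨rfl, by simp [idealPath], fun ⟨i, hi⟩ => ?_⟩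
  rcases i with _ | j
  · exact isSnakeStep_tilePos_idealPath A (Nat.zero_le _)
  · rcases (show j ≤ w.length by omega).lt_or_eq with hj | rfl
    · exact hA.isSnakeStep_idealPath hj
    · exact isSnakeStep_idealPath_last w A

theorem tilesAbove_idealPath (hA : A ∈ tileIdeals w) :
    tilesAbove w (fun i => idealPath w A i) = A := by
  obtain ⟨hlen, hideal⟩ := mem_tileIdeals.1 hA
  ext j
  rw [mem_tilesAbove]
  refine ⟨fun ⟨hj, habove⟩ => ?_, fun hjA => ⟨hlen j hjA, ?_⟩⟩
  · rw [hideal.isSnakePath_idealPath.tileAbove_iff hj] at habove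
    by_contra hjA
    simp [idealPath_succ_of_notMem hj hjA] at habove
  · exact (hideal.isSnakePath_idealPath.tileAbove_iff (hlen j hjA)).2
      (idealPath_succ_of_mem (hlen j hjA) hjA)

/-- The bijection between monotone paths and order ideals of the fence poset, sending a path to the
set of tiles above it. -/
noncomputable def snakePathEquiv (w : List Bool) : SnakePath w ≃ tileIdeals w :=
  Equiv.ofBijective (fun p => ⟨tilesAbove w p.1, p.2.tilesAbove_mem_tileIdeals⟩)
    ⟨fun p p' h => Subtype.ext (p.2.eq_of_tilesAbove_eq p'.2 (congrArg Subtype.val h)),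
      fun A => ⟨⟨_, (mem_tileIdeals.1 A.2).2.isSnakePath_idealPath⟩,
        Subtype.ext (tilesAbove_idealPath A.2)⟩⟩

end SnakePath

section GeneratingFunction

variable {R : Type*} [CommSemiring R]

theorem isTileIdeal_append_singleton {w : List Bool} {b : Bool} {A : Finset ℕ} :
    IsTileIdeal (w ++ [b]) A ↔ IsTileIdeal w A ∧
      (b = false → w.length + 1 ∈ A → w.length ∈ A) ∧
      (b = true → w.length ∈ A → w.length + 1 ∈ A) := by
  constructor
  · refine fun h => ⟨fun j => ?_, by simpa using h w.length⟩
    refine (h j).imp (fun h hb => h ?_) fun h hb => h ?_ <;>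
    · rwa [List.getElem?_append_left (List.getElem?_eq_some_iff.1 hb).1]
  · rintro ⟨h, hlast⟩ j
    rcases lt_trichotomy j w.length with hj | rfl | hj
    · rw [List.getElem?_append_left hj]
      exact h j
    · simpa using hlast
    · simp [List.getElem?_eq_none (show (w ++ [b]).length ≤ j by simpa using hj)]

theorem isTileIdeal_insert_iff {w : List Bool} {A : Finset ℕ} {n : ℕ} (hn : w.length < n) :
    IsTileIdeal w (insert n A) ↔ IsTileIdeal w A := by
  refine forall_congr' fun j => ?_
  rcases lt_or_ge j w.length with hj | hj
  · simp [show j ≠ n by omega, show j + 1 ≠ n by omega]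
  · simp [List.getElem?_eq_none hj]

/-- The transfer map that prepends a tile to a snake graph, on pairs of generating functions (of
the ideals containing the first tile, of the ideals avoiding it). -/
def tileStep (q : R) : Bool → R × R → R × R
  | false, v => (q * (v.1 + v.2), v.2)
  | true, v => (q * v.1, v.1 + v.2)

theorem sum_tileIdeals_append_singleton (f : Finset ℕ → R) (w : List Bool) (b : Bool) :
    ∑ A ∈ tileIdeals (w ++ [b]), f A = ∑ A ∈ tileIdeals w,
      ((if b = true ∧ w.length ∈ A then 0 else f A) +
        if b = false ∧ w.length ∉ A then 0 else f (insert (w.length + 1) A)) := by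
  rw [tileIdeals, tileIdeals, Finset.sum_filter, Finset.sum_filter, List.length_append,
    List.length_singleton, Finset.range_add_one (n := w.length + 1),
    Finset.sum_powerset_insert Finset.notMem_range_self, ← Finset.sum_add_distrib]
  refine Finset.sum_congr rfl fun A hA => ?_
  have hn : w.length + 1 ∉ A := fun h =>
    Finset.notMem_range_self (Finset.mem_powerset.1 hA h)
  rw [isTileIdeal_append_singleton, isTileIdeal_append_singleton,
    isTileIdeal_insert_iff (Nat.lt_succ_self _)]
  by_cases hideal : IsTileIdeal w A <;> by_cases hlast : w.length ∈ A <;> cases b <;>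
    simp [hideal, hlast, hn]

theorem pow_card_eq_pow_card_erase_mul (q : R) (A : Finset ℕ) (n : ℕ) :
    q ^ A.card = q ^ (A.erase n).card * if n ∈ A then q else 1 := by
  split_ifs with h
  · rw [← pow_succ, Finset.card_erase_add_one h]
  · rw [Finset.erase_eq_of_notMem h, mul_one]

/- The weight `v` of the last tile is kept free because the induction removes the last letter,
which `foldr` applies first. -/
theorem sum_tileIdeals_eq_foldr (q : R) (w : List Bool) (v : R × R) :
    ∑ A ∈ tileIdeals w, q ^ (A.erase w.length).card * (if w.length ∈ A then v.1 else v.2) =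
      (w.foldr (tileStep q) v).1 + (w.foldr (tileStep q) v).2 := by
  induction w using List.reverseRecOn generalizing v with
  | nil =>
    have hnil : tileIdeals [] = {∅, {0}} := by
      ext A
      simp [tileIdeals, IsTileIdeal, Finset.subset_singleton_iff]
    rw [hnil, Finset.sum_pair (by simp)]
    simp [add_comm]
  | append_singleton w b ih =>
    rw [List.foldr_append, List.foldr_cons, List.foldr_nil, ← ih,
      sum_tileIdeals_append_singleton, List.length_append, List.length_singleton]
    refine Finset.sum_congr rfl fun A hA => ?_
    have hn : w.length + 1 ∉ A := fun h => by
      have := (mem_tileIdeals.1 hA).1 _ h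
      omega
    rw [Finset.erase_insert hn, Finset.erase_eq_of_notMem hn, if_neg hn,
      if_pos (Finset.mem_insert_self _ _), pow_card_eq_pow_card_erase_mul q A w.length]
    by_cases hlast : w.length ∈ A <;> cases b <;> simp [hlast, tileStep] <;> ring

theorem sum_tileIdeals_pow_card (q : R) (w : List Bool) :
    ∑ A ∈ tileIdeals w, q ^ A.card =
      (w.foldr (tileStep q) (q, 1)).1 + (w.foldr (tileStep q) (q, 1)).2 := by
  rw [← sum_tileIdeals_eq_foldr]
  exact Finset.sum_congr rfl fun A _ => pow_card_eq_pow_card_erase_mul q A w.length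

theorem map_foldr_tileStep {S : Type*} [CommSemiring S] (f : R →+* S) (q : R) (w : List Bool)
    (v : R × R) :
    Prod.map f f (w.foldr (tileStep q) v) = w.foldr (tileStep (f q)) (Prod.map f f v) := by
  induction w with
  | nil => rfl
  | cons b w ih =>
    rw [List.foldr_cons, List.foldr_cons, ← ih]
    cases b <;> simp [tileStep]

theorem foldr_tileStep_replicate_false (q : R) (k : ℕ) (v : R × R) :
    (List.replicate k false).foldr (tileStep q) v =
      (q ^ k * v.1 + q * (∑ i ∈ Finset.range k, q ^ i) * v.2, v.2) := by
  induction k with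
  | zero => simp
  | succ k ih =>
    rw [List.replicate_succ, List.foldr_cons, ih, tileStep, geom_sum_succ]
    exact Prod.ext (by ring) rfl

theorem foldr_tileStep_replicate_true (q : R) (k : ℕ) (v : R × R) :
    (List.replicate k true).foldr (tileStep q) v =
      (q ^ k * v.1, (∑ i ∈ Finset.range k, q ^ i) * v.1 + v.2) := by
  induction k with
  | zero => simp
  | succ k ih =>
    rw [List.replicate_succ, List.foldr_cons, ih, tileStep, geom_sum_succ']
    exact Prod.ext (by ring) (by ring)

end GeneratingFunction

section Polynomial

open Polynomial

variable {R : Type*} [CommSemiring R] {v : R[X] × R[X]}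

theorem foldr_tileStep_fst_monic_and_degree_lt (hfst : v.1.Monic) (hlt : v.2.degree < v.1.degree)
    (w : List Bool) :
    (w.foldr (tileStep X) v).1.Monic ∧
      (w.foldr (tileStep X) v).2.degree < (w.foldr (tileStep X) v).1.degree := by
  induction w with
  | nil => exact ⟨hfst, hlt⟩
  | cons b w ih =>
    rw [List.foldr_cons]
    generalize w.foldr (tileStep X) v = u at ih
    obtain ⟨hmonic, hdeg⟩ := ih
    have : Nontrivial R := nontrivial_iff.1 ⟨u.1, 0, ne_zero_of_degree_gt hdeg⟩
    have hsum : (u.1 + u.2).Monic := hmonic.add_of_left hdeg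
    have hsumdeg : (u.1 + u.2).degree = u.1.degree := degree_add_eq_left_of_degree_lt hdeg
    have hX : u.1.degree < (X * u.1).degree :=
      X_mul (p := u.1) ▸ degree_lt_degree_mul_X hmonic.ne_zero
    cases b
    · have hXsum : (X * (u.1 + u.2)).degree = (X * u.1).degree := by
        rw [X_mul, X_mul, degree_mul_X, degree_mul_X, hsumdeg]
      exact ⟨monic_X.mul hsum, (hdeg.trans hX).trans_eq hXsum.symm⟩
    · exact ⟨monic_X.mul hmonic, hsumdeg.trans_lt hX⟩

theorem foldr_tileStep_snd_monic (hfst : v.1.Monic) (hlt : v.2.degree < v.1.degree)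
    {w : List Bool} (h : v.2.Monic ∨ true ∈ w) : (w.foldr (tileStep X) v).2.Monic := by
  induction w with
  | nil => simpa using h
  | cons b w ih =>
    obtain ⟨hmonic, hdeg⟩ := foldr_tileStep_fst_monic_and_degree_lt hfst hlt w
    cases b
    · exact ih (by simpa using h)
    · exact hmonic.add_of_left hdeg

theorem eval_zero_foldr_tileStep (hfst : v.1.eval 0 = 0) (hsnd : v.2.eval 0 = 1)
    (w : List Bool) :
    (w.foldr (tileStep X) v).1.eval 0 = 0 ∧ (w.foldr (tileStep X) v).2.eval 0 = 1 := by
  induction w with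
  | nil => exact ⟨hfst, hsnd⟩
  | cons b w ih => cases b <;> simp [tileStep, ih]

theorem isCoprime_X_of_eval_zero_eq_one {S : Type*} [CommRing S] {f : S[X]} (hf : f.eval 0 = 1) :
    IsCoprime X f := by
  refine ⟨-f.divX, 1, ?_⟩
  have hdiv := divX_mul_X_add f
  rw [coeff_zero_eq_eval_zero, hf, C_1] at hdiv
  linear_combination -hdiv

theorem isCoprime_foldr_tileStep {S : Type*} [CommRing S] {v : S[X] × S[X]} (hfst : v.1.eval 0 = 0)
    (hsnd : v.2.eval 0 = 1) (hv : IsCoprime v.1 v.2) (w : List Bool) :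
    IsCoprime (w.foldr (tileStep X) v).1 (w.foldr (tileStep X) v).2 := by
  induction w with
  | nil => exact hv
  | cons b w ih =>
    have hX := isCoprime_X_of_eval_zero_eq_one (eval_zero_foldr_tileStep hfst hsnd (b :: w)).2
    rw [List.foldr_cons] at hX ⊢
    cases b <;> refine hX.mul_left ?_ <;> rw [tileStep]
    · simpa using ih.add_mul_left_left 1
    · simpa [add_comm] using ih.add_mul_left_right 1

variable {K : Type*} [Field K]

theorem foldr_tileStep_ratFunc_ne_zero (w : List Bool) :
    (w.foldr (tileStep (RatFunc.X : RatFunc K)) (1, 0)).1 ≠ 0 ∧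
      (true ∈ w → (w.foldr (tileStep (RatFunc.X : RatFunc K)) (1, 0)).2 ≠ 0) := by
  have hmap := map_foldr_tileStep (algebraMap K[X] (RatFunc K)) X w (1, 0)
  simp only [Prod.map_apply, map_one, map_zero, RatFunc.algebraMap_X] at hmap
  have hlt : (0 : K[X]).degree < (1 : K[X]).degree := by simp
  rw [← hmap]
  exact ⟨RatFunc.algebraMap_ne_zero
      (foldr_tileStep_fst_monic_and_degree_lt monic_one hlt w).1.ne_zero,
    fun htrue => RatFunc.algebraMap_ne_zero
      (foldr_tileStep_snd_monic monic_one hlt (.inr htrue)).ne_zero⟩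

theorem ratFunc_num_div_of_isCoprime {p q : K[X]} (hq : q.Monic) (h : IsCoprime p q) :
    (algebraMap _ (RatFunc K) p / algebraMap _ (RatFunc K) q).num = p := by
  have hgcd : gcd p q = 1 := by
    rw [← normalize_gcd, normalize_eq_one]
    exact (gcd_isUnit_iff p q).2 h
  simp [RatFunc.num_div, hgcd, hq.leadingCoeff]

end Polynomial

section AlternatingWord

/-- Consecutive constant blocks of the lengths in a list, with letters alternating from the given
one. Unlike in `snakeWord`, the first and the last block are not shortened. -/
def altWord : Bool → List ℕ → List Bool
  | _, [] => []
  | b, x :: l => List.replicate x b ++ altWord (!b) l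

theorem altWord_eq_flatMap (b : Bool) (l : List ℕ) :
    altWord b l = (List.range l.length).flatMap fun i =>
      List.replicate (l.getD i 0) (b ^^ (i % 2 == 1)) := by
  induction l generalizing b with
  | nil => rfl
  | cons x l ih =>
    rw [altWord, ih, List.length_cons, List.range_succ_eq_map, List.flatMap_cons,
      List.flatMap_map]
    congr 1
    · simp
    · congr 1
      funext i
      rcases Nat.mod_two_eq_zero_or_one i with h | h <;>
        simp [h, Nat.succ_eq_add_one, Nat.add_mod]

theorem cons_snakeWord_append {a : List ℕ} (hne : a ≠ []) (heven : Even a.length)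
    (hpos : ∀ x ∈ a, 1 ≤ x) : false :: (snakeWord a ++ [true]) = altWord false a := by
  have hlength := List.length_pos_of_ne_nil hne
  obtain ⟨m, hm⟩ := heven
  obtain ⟨k, hk⟩ : ∃ k, a.length = k + 1 + 1 := ⟨a.length - 2, by omega⟩
  have hget (i : ℕ) (hi : i < a.length) : a.getD i 0 - 1 + 1 = a.getD i 0 := by
    rw [List.getD_eq_getElem _ _ hi]
    exact Nat.sub_add_cancel (hpos _ (List.getElem_mem hi))
  rw [altWord_eq_flatMap, snakeWord, hk, List.range_succ, List.range_succ_eq_map]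
  simp only [List.cons_append, List.flatMap_cons, List.flatMap_append, List.flatMap_nil,
    List.append_nil, List.append_assoc]
  rw [← List.cons_append]
  congr 1
  · rw [if_pos (by simp), ← hget 0 hlength, List.replicate_succ]
    simp
  congr 1
  · rw [List.flatMap_map, List.flatMap_map]
    refine List.flatMap_congr fun i hi => ?_
    have := List.mem_range.1 hi
    rw [if_neg (by omega)]
    simp
  · have hodd : (k + 1) % 2 = 1 := by omega
    rw [if_pos (by omega), ← hget (k + 1) (by omega), List.replicate_succ', hodd]
    simp

end AlternatingWord

section ContinuedFraction

/- Junk values make this uniform in `l`: `qCF _ [] = 0`, and dividing by it gives `0`. -/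
theorem qCF_cons (v : RatFunc ℚ) (x : ℕ) (l : List ℕ) :
    qCF v (x :: l) = ∑ i ∈ Finset.range x, v ^ i + v ^ x / qCF v⁻¹ l := by
  cases l <;> simp [qCF]

variable {K : Type*} [Field K] {q : K} {v : K × K}

theorem pow_mul_sum_inv_pow (hq : q ≠ 0) (k : ℕ) :
    q ^ k * ∑ i ∈ Finset.range k, q⁻¹ ^ i = q * ∑ i ∈ Finset.range k, q ^ i := by
  induction k with
  | zero => simp
  | succ k ih =>
    have h : q ^ k * q⁻¹ ^ k = 1 := by rw [← mul_pow, mul_inv_cancel₀ hq, one_pow]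
    rw [Finset.sum_range_succ, geom_sum_succ]
    linear_combination q * ih + q * h

theorem sum_pow_add_pow_div_eq_foldr (hv : v.2 ≠ 0) (hq : q ≠ 0) (k : ℕ) :
    ∑ i ∈ Finset.range k, q ^ i + q ^ k / (q * v.2 / v.1) =
      ((List.replicate k false).foldr (tileStep q) v).1 /
        (q * ((List.replicate k false).foldr (tileStep q) v).2) := by
  rw [foldr_tileStep_replicate_false]
  field_simp
  ring

theorem sum_inv_pow_add_inv_pow_div_eq_foldr (hv : v.1 ≠ 0) (hq : q ≠ 0) (k : ℕ) :
    ∑ i ∈ Finset.range k, q⁻¹ ^ i + q⁻¹ ^ k / (v.1 / (q * v.2)) =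
      q * ((List.replicate k true).foldr (tileStep q) v).2 /
        ((List.replicate k true).foldr (tileStep q) v).1 := by
  have hqk : q ^ k ≠ 0 := pow_ne_zero _ hq
  rw [foldr_tileStep_replicate_true, eq_div_iff (mul_ne_zero hqk hv), mul_add,
    ← mul_assoc q, ← pow_mul_sum_inv_pow hq, div_div_eq_mul_div, inv_pow]
  field_simp

theorem qCF_eq_foldr : ∀ l : List ℕ, Even l.length → (∀ x ∈ l, 1 ≤ x) →
    qCF RatFunc.X l = ((altWord false l).foldr (tileStep RatFunc.X) (1, 0)).1 /
      (RatFunc.X * ((altWord false l).foldr (tileStep RatFunc.X) (1, 0)).2)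
  | [], _, _ => by simp [qCF, altWord]
  | [_], heven, _ => by simp at heven
  | x :: y :: l, heven, hpos => by
    have hX : (RatFunc.X : RatFunc ℚ) ≠ 0 := RatFunc.X_ne_zero
    have ih := qCF_eq_foldr l (by simpa [Nat.even_add_one] using heven)
      fun z hz => hpos z (by simp [hz])
    have htrue : true ∈ altWord true (y :: l) := by
      have := hpos y (by simp)
      simp [altWord, show y ≠ 0 by omega]
    have hinner : qCF RatFunc.X⁻¹ (y :: l) =
        RatFunc.X * ((altWord true (y :: l)).foldr (tileStep RatFunc.X) (1, 0)).2 /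
          ((altWord true (y :: l)).foldr (tileStep RatFunc.X) (1, 0)).1 := by
      rw [qCF_cons, inv_inv, ih, altWord, List.foldr_append]
      exact sum_inv_pow_add_inv_pow_div_eq_foldr (foldr_tileStep_ratFunc_ne_zero _).1 hX y
    have hword : altWord false (x :: y :: l) = List.replicate x false ++ altWord true (y :: l) :=
      rfl
    rw [qCF_cons, hinner, hword, List.foldr_append]
    exact sum_pow_add_pow_div_eq_foldr ((foldr_tileStep_ratFunc_ne_zero _).2 htrue) hX x

open Polynomial in
theorem num_qCF {a : List ℕ} (hne : a ≠ []) (heven : Even a.length) (hpos : ∀ x ∈ a, 1 ≤ x) :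
    (qCF RatFunc.X a).num = ∑ A ∈ tileIdeals (snakeWord a), (X : ℚ[X]) ^ A.card := by
  have hmap := map_foldr_tileStep (algebraMap ℚ[X] (RatFunc ℚ)) X (snakeWord a) (X, 1)
  have hmonic : ((snakeWord a).foldr (tileStep (X : ℚ[X])) (X, 1)).2.Monic :=
    foldr_tileStep_snd_monic monic_X (by simp) (.inl monic_one)
  have hcoprime := isCoprime_foldr_tileStep (v := ((X : ℚ[X]), 1)) eval_X eval_one
    isCoprime_one_right (snakeWord a)
  rw [qCF_eq_foldr a heven hpos, ← cons_snakeWord_append hne heven hpos, List.foldr_cons,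
    List.foldr_append, sum_tileIdeals_pow_card]
  simp only [Prod.map_apply, map_one, RatFunc.algebraMap_X] at hmap
  have hlast : [true].foldr (tileStep (RatFunc.X : RatFunc ℚ)) (1, 0) = (RatFunc.X, 1) := by
    simp [tileStep]
  rw [hlast, ← hmap, tileStep, mul_div_mul_left _ _ RatFunc.X_ne_zero, Prod.map_fst,
    Prod.map_snd, ← map_add]
  exact ratFunc_num_div_of_isCoprime hmonic (by simpa using hcoprime.add_mul_left_left 1)

end ContinuedFraction

/-- The poset of monotone lattice paths on the snake graph `G(r/s)`
(ordered by containment of the sets of tiles above the path) is isomorphic to the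
interval `[μ, λ]` in Young's lattice (partitions `ν` with `μ ≤ ν ≤ λ`, ordered by
containment), where `λ = λ(r/s)`, `μ = μ(r/s)`; consequently
`q^{|μ|} R(q) = ∑_{μ ≤ ν ≤ λ} q^{|ν|}` where `R(q)` is the numerator of `[r/s]_q`. -/
theorem snake_paths_orderIso_young_interval
    (m : ℕ) (hm : 0 < m) (a : List ℕ) (hlen : a.length = 2 * m)
    (hpos : ∀ x ∈ a, 1 ≤ x) :
    (∃ e : {p : Fin ((snakeWord a).length + 3) → ℕ × ℕ // IsSnakePath (snakeWord a) p} ≃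
        {ν : ℕ → ℕ // Antitone ν ∧
          ∀ y, muPart (snakeWord a) y ≤ ν y ∧ ν y ≤ lamPart (snakeWord a) y},
      ∀ p p', (∀ j ≤ (snakeWord a).length,
          TileAbove (snakeWord a) p.1 j → TileAbove (snakeWord a) p'.1 j) ↔
        ∀ y, (e p).1 y ≤ (e p').1 y) ∧
    ∑ᶠ ν : {ν : ℕ → ℕ // Antitone ν ∧
        ∀ y, muPart (snakeWord a) y ≤ ν y ∧ ν y ≤ lamPart (snakeWord a) y},
      (Polynomial.X : Polynomial ℚ) ^ (∑ y ∈ Finset.range (snakeHeight (snakeWord a)), ν.1 y) =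
    (Polynomial.X : Polynomial ℚ) ^
        (∑ y ∈ Finset.range (snakeHeight (snakeWord a)), muPart (snakeWord a) y) *
      (qCF RatFunc.X a).num := by
  have hne : a ≠ [] := List.ne_nil_of_length_pos (by omega)
  have heven : Even a.length := ⟨m, by omega⟩
  let e := (snakePathEquiv (snakeWord a)).trans (youngIntervalOrderIso (snakeWord a)).symm.toEquiv
  refine ⟨⟨e, fun p p' => ?_⟩, ?_⟩
  · rw [← tilesAbove_subset_iff]
    exact ((youngIntervalOrderIso _).symm.le_iff_le (x := snakePathEquiv _ p)
      (y := snakePathEquiv _ p')).symm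
  · rw [num_qCF hne heven hpos]
    exact finsum_youngInterval_pow Polynomial.X (snakeWord a)
end
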